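/- Let β⁰ ∈ ℂ^p be s₀-sparse, let y = Xβ⁰ + ε, and let δ ∈ (0,1). Suppose X/√n satisfies the restricted isometry property of order t := (36·(1+δ)/(1−δ) + 1)·s₀ with constant δ_t < δ, and suppose max_{1≤j≤p} (2/n)|⟨ε, X_j⟩| ≤ λ₀ with λ₀ = (σ√K/√n)(2 + √(10 log p)). Let β̂ be the complex LASSO estimator with regularization parameter λ = 2λ₀, and assume p ≥ 3. Then ‖β̂ − β⁰‖₂ ≤ C_δ^σ · √K · √(s₀ log p)/√n, where C_δ^σ = √640 · σ/(1 − δ_t). -/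

import Mathlib

open Matrix Finset

/-- The number of nonzero entries of a vector. -/
noncomputable def sparseCount {p : ℕ} (v : Fin p → ℂ) : ℕ :=
  (Finset.univ.filter fun i => v i ≠ 0).card

/-- Squared `ℓ₂` norm of a complex vector. -/
noncomputable def l2sq {m : ℕ} (v : Fin m → ℂ) : ℝ := ∑ i, ‖v i‖ ^ 2

/-- `ℓ₁` norm of a complex vector. -/
noncomputable def l1 {m : ℕ} (v : Fin m → ℂ) : ℝ := ∑ i, ‖v i‖

/-- `A` satisfies the restricted isometry property of (real) order `s` with constant `d`. -/
def RIP {n p : ℕ} (A : Matrix (Fin n) (Fin p) ℂ) (s : ℝ) (d : ℝ) : Prop :=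
  ∀ β : Fin p → ℂ, (sparseCount β : ℝ) ≤ s →
    (1 - d) * l2sq β ≤ l2sq (A.mulVec β) ∧ l2sq (A.mulVec β) ≤ (1 + d) * l2sq β

/-- `b` is a complex LASSO estimator for data `y`, design `X` and parameter `lam`. -/
def IsLasso {n p : ℕ} (X : Matrix (Fin n) (Fin p) ℂ) (y : Fin n → ℂ) (lam : ℝ)
    (b : Fin p → ℂ) : Prop :=
  ∀ z : Fin p → ℂ,
    1 / (2 * n) * l2sq (X.mulVec b - y) + lam * l1 b ≤
      1 / (2 * n) * l2sq (X.mulVec z - y) + lam * l1 z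

open ComplexConjugate

noncomputable def res {p : ℕ} (T : Finset (Fin p)) (v : Fin p → ℂ) : Fin p → ℂ :=
  fun i => if i ∈ T then v i else 0

lemma l2sq_nonneg' {p : ℕ} (v : Fin p → ℂ) : 0 ≤ l2sq v :=
  Finset.sum_nonneg fun i _ => by positivity

lemma l1_nonneg' {p : ℕ} (v : Fin p → ℂ) : 0 ≤ l1 v :=
  Finset.sum_nonneg fun i _ => by positivity

lemma l2sq_res {p : ℕ} (T : Finset (Fin p)) (v : Fin p → ℂ) :
    l2sq (res T v) = ∑ i ∈ T, ‖v i‖ ^ 2 := by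
  unfold l2sq res
  rw [← Finset.sum_filter_add_sum_filter_not Finset.univ (fun i => i ∈ T)]
  rw [Finset.sum_congr rfl (g := fun i => ‖v i‖ ^ 2), Finset.sum_congr (s₁ := Finset.univ.filter fun i => i ∉ T) rfl (g := fun i => (0:ℝ))]
  · simp
  · intro i hi; simp at hi; simp [hi]
  · intro i hi; simp at hi; simp [hi]

lemma l1_res {p : ℕ} (T : Finset (Fin p)) (v : Fin p → ℂ) :
    l1 (res T v) = ∑ i ∈ T, ‖v i‖ := by
  unfold l1 res
  rw [← Finset.sum_filter_add_sum_filter_not Finset.univ (fun i => i ∈ T)]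
  rw [Finset.sum_congr rfl (g := fun i => ‖v i‖), Finset.sum_congr (s₁ := Finset.univ.filter fun i => i ∉ T) rfl (g := fun i => (0:ℝ))]
  · simp
  · intro i hi; simp at hi; simp [hi]
  · intro i hi; simp at hi; simp [hi]

lemma sparse_res {p : ℕ} (T : Finset (Fin p)) (v : Fin p → ℂ) :
    sparseCount (res T v) ≤ T.card := by
  unfold sparseCount res
  apply Finset.card_le_card
  intro i hi
  simp at hi
  exact hi.1

lemma l1_split {p : ℕ} (T : Finset (Fin p)) (v : Fin p → ℂ) :
    l1 v = l1 (res T v) + l1 (res Tᶜ v) := by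
  rw [l1_res, l1_res, Finset.sum_add_sum_compl]; rfl

lemma exists_top {p : ℕ} (v : Fin p → ℝ) (m : ℕ) (hm : m ≤ p) :
    ∃ T : Finset (Fin p), T.card = m ∧ ∀ i ∈ T, ∀ j ∉ T, v j ≤ v i := by
  induction m with
  | zero => exact ⟨∅, by simp⟩
  | succ k ih =>
    obtain ⟨T, hT, h⟩ := ih (by omega)
    have hne : (Tᶜ).Nonempty := by
      rw [← Finset.card_pos, Finset.card_compl, Fintype.card_fin]; omega
    obtain ⟨a, ha, hmax⟩ := Finset.exists_max_image Tᶜ v hne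
    have ha' : a ∉ T := by simpa using ha
    refine ⟨insert a T, by rw [Finset.card_insert_of_notMem ha', hT], ?_⟩
    intro i hi j hj
    simp only [Finset.mem_insert, not_or] at hi hj
    rcases hi with rfl | hi
    · exact hmax j (by simpa using hj.2)
    · exact h i hi j hj.2

section abs
variable {p : ℕ} {E : Type*} [NormedAddCommGroup E] [InnerProductSpace ℂ E]

/-- sup-norm block bound -/
lemma block_sup (f : (Fin p → ℂ) →ₗ[ℂ] E) (C : ℝ) (hC : 0 ≤ C) (M : ℕ) (hM : 0 < M)
    (hf : ∀ v, sparseCount v ≤ M → ‖f v‖ ≤ C * Real.sqrt (l2sq v)) :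
    ∀ (N : ℕ) (v : Fin p → ℂ) (a : ℝ), 0 ≤ a → sparseCount v ≤ N → (∀ i, ‖v i‖ ≤ a) →
      ‖f v‖ ≤ C * (Real.sqrt M * a + l1 v / Real.sqrt M) := by
  have hsM : 0 < Real.sqrt M := Real.sqrt_pos.2 (by exact_mod_cast hM)
  have small : ∀ (T : Finset (Fin p)) (v : Fin p → ℂ) (a : ℝ), 0 ≤ a → T.card ≤ M →
      (∀ i, ‖v i‖ ≤ a) → ‖f (res T v)‖ ≤ C * (Real.sqrt M * a) := by
    intro T v a ha hT hv
    refine (hf _ ((sparse_res T v).trans hT)).trans ?_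
    apply mul_le_mul_of_nonneg_left _ hC
    rw [l2sq_res]
    apply Real.sqrt_le_iff.2 ⟨by positivity, ?_⟩
    rw [mul_pow, Real.sq_sqrt (by positivity)]
    calc ∑ i ∈ T, ‖v i‖ ^ 2 ≤ ∑ i ∈ T, a ^ 2 := by
          apply Finset.sum_le_sum; intro i _
          exact pow_le_pow_left₀ (norm_nonneg _) (hv i) 2
      _ = T.card * a ^ 2 := by simp
      _ ≤ M * a ^ 2 := by
          have : (T.card : ℝ) ≤ M := by exact_mod_cast hT
          gcongr
  intro N
  induction N with
  | zero =>
    intro v a ha hN hv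
    have : v = 0 := by
      funext i
      by_contra h
      have : i ∈ Finset.univ.filter fun i => v i ≠ 0 := by simpa using h
      unfold sparseCount at hN
      have := Finset.card_pos.2 ⟨i, this⟩
      omega
    rw [this, map_zero, norm_zero]
    have := l1_nonneg' (0 : Fin p → ℂ)
    positivity
  | succ N ih =>
    intro v a ha hN hv
    by_cases hs : sparseCount v ≤ M
    · have h1 := small (Finset.univ.filter fun i => v i ≠ 0) v a ha hs hv
      have h2 : res (Finset.univ.filter fun i => v i ≠ 0) v = v := by
        funext i; by_cases h : v i = 0 <;> simp [res, h]
      rw [h2] at h1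
      refine h1.trans ?_
      have := l1_nonneg' v
      apply mul_le_mul_of_nonneg_left _ hC
      have : 0 ≤ l1 v / Real.sqrt M := by positivity
      linarith
    · push Not at hs
      have hpp : sparseCount v ≤ p := by
        unfold sparseCount; exact (Finset.card_le_univ _).trans (by simp)
      obtain ⟨T, hT, htop⟩ := exists_top (fun i => ‖v i‖) M (by omega)
      have hTne : T.Nonempty := Finset.card_pos.1 (by omega)
      obtain ⟨a0, ha0, hmin⟩ := Finset.exists_min_image T (fun i => ‖v i‖) hTne
      have hdec : v = res T v + res Tᶜ v := by
        funext i; by_cases h : i ∈ T <;> simp [res, h]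
      have h1 := small T v a ha hT.le hv
      have hTnz : ∀ i ∈ T, v i ≠ 0 := by
        by_contra hcon
        push Not at hcon
        obtain ⟨i, hi, hi0⟩ := hcon
        have : sparseCount v ≤ T.card := by
          unfold sparseCount
          apply Finset.card_le_card
          intro j hj
          by_contra hjT
          have := htop i hi j hjT
          simp [hi0] at this hj
          exact hj this
        omega
      have h2 := ih (res Tᶜ v) ‖v a0‖ (norm_nonneg _) (by
          have : sparseCount (res Tᶜ v) < sparseCount v := by
            unfold sparseCount
            apply Finset.card_lt_card
            refine ⟨?_, ?_⟩
            · intro i hi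
              simp [res] at hi ⊢
              exact hi.2
            · intro hsub
              have := hsub (by simpa using hTnz a0 ha0 : a0 ∈ _)
              simp [res, ha0] at this
          omega) (by
          intro i
          by_cases h : i ∈ T
          · simp [res, h]
          · simpa [res, h] using htop a0 ha0 i h)
      have h3 : Real.sqrt M * ‖v a0‖ ≤ l1 (res T v) / Real.sqrt M := by
        rw [le_div_iff₀ hsM, l1_res]
        have : (M : ℝ) * ‖v a0‖ ≤ ∑ i ∈ T, ‖v i‖ := by
          have := Finset.card_nsmul_le_sum T (fun i => ‖v i‖) ‖v a0‖ hmin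
          rw [hT] at this
          simpa using this
        calc _ = (Real.sqrt M * Real.sqrt M) * ‖v a0‖ := by ring
          _ = M * ‖v a0‖ := by rw [Real.mul_self_sqrt (by positivity)]
          _ ≤ _ := this
      have h4 : ‖f v‖ ≤ ‖f (res T v)‖ + ‖f (res Tᶜ v)‖ := by
        conv_lhs => rw [hdec, map_add]
        exact norm_add_le _ _
      have h5 : C * (Real.sqrt M * ‖v a0‖) ≤ C * (l1 (res T v) / Real.sqrt M) :=
        mul_le_mul_of_nonneg_left h3 hC
      rw [l1_split T v, add_div]
      nlinarith

lemma block_tail (f : (Fin p → ℂ) →ₗ[ℂ] E) (C : ℝ) (hC : 0 ≤ C) (M : ℕ) (hM : 0 < M)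
    (hf : ∀ v, sparseCount v ≤ M → ‖f v‖ ≤ C * Real.sqrt (l2sq v)) (v : Fin p → ℂ) :
    ∃ T : Finset (Fin p), T.card ≤ M ∧ ‖f (res Tᶜ v)‖ ≤ C * (l1 v / Real.sqrt M) := by
  have hsM : 0 < Real.sqrt M := Real.sqrt_pos.2 (by exact_mod_cast hM)
  by_cases hs : p ≤ M
  · refine ⟨Finset.univ, by simpa using hs, ?_⟩
    have : res (Finset.univ)ᶜ v = 0 := by funext i; simp [res]
    rw [this, map_zero, norm_zero]
    have := l1_nonneg' v
    positivity
  · push Not at hs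
    obtain ⟨T, hT, htop⟩ := exists_top (fun i => ‖v i‖) M (by omega)
    have hTne : T.Nonempty := Finset.card_pos.1 (by omega)
    obtain ⟨a0, ha0, hmin⟩ := Finset.exists_min_image T (fun i => ‖v i‖) hTne
    refine ⟨T, hT.le, ?_⟩
    have h2 := block_sup f C hC M hM hf _ (res Tᶜ v) ‖v a0‖ (norm_nonneg _) le_rfl (by
          intro i
          by_cases h : i ∈ T
          · simp [res, h]
          · simpa [res, h] using htop a0 ha0 i h)
    have h3 : Real.sqrt M * ‖v a0‖ ≤ l1 (res T v) / Real.sqrt M := by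
      rw [le_div_iff₀ hsM, l1_res]
      have : (M : ℝ) * ‖v a0‖ ≤ ∑ i ∈ T, ‖v i‖ := by
        have := Finset.card_nsmul_le_sum T (fun i => ‖v i‖) ‖v a0‖ hmin
        rw [hT] at this
        simpa using this
      calc _ = (Real.sqrt M * Real.sqrt M) * ‖v a0‖ := by ring
        _ = M * ‖v a0‖ := by rw [Real.mul_self_sqrt (by positivity)]
        _ ≤ _ := this
    refine h2.trans (mul_le_mul_of_nonneg_left ?_ hC)
    rw [l1_split T v, add_div]
    linarith

lemma vi (f : (Fin p → ℂ) →ₗ[ℂ] E) (y : E) (lam : ℝ) (hl : 0 < lam) (b : Fin p → ℂ)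
    (hmin : ∀ z, 1 / 2 * ‖f b - y‖ ^ 2 + lam * l1 b ≤ 1 / 2 * ‖f z - y‖ ^ 2 + lam * l1 z)
    (d : Fin p → ℂ) :
    0 ≤ (inner ℂ (f d) (f b - y)).re + lam * (l1 (b + d) - l1 b) := by
  set A := (inner ℂ (f d) (f b - y)).re + lam * (l1 (b + d) - l1 b) with hA
  have key : ∀ u : ℝ, 0 < u → u ≤ 1 → 0 ≤ A + u * (‖f d‖ ^ 2 / 2) := by
    intro u hu hu1
    have h1 := hmin (b + (u : ℂ) • d)
    have h2 : l1 (b + (u : ℂ) • d) ≤ (1 - u) * l1 b + u * l1 (b + d) := by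
      unfold l1
      rw [Finset.mul_sum, Finset.mul_sum, ← Finset.sum_add_distrib]
      apply Finset.sum_le_sum
      intro i _
      have : (b + (u : ℂ) • d) i = ((1 - u : ℝ) : ℂ) * b i + (u : ℂ) * (b + d) i := by
        simp; ring
      rw [this]
      refine (norm_add_le _ _).trans (le_of_eq ?_)
      rw [norm_mul, norm_mul, Complex.norm_real, Complex.norm_real, Real.norm_of_nonneg hu.le,
        Real.norm_of_nonneg (by linarith)]
    have h3 : ‖f (b + (u : ℂ) • d) - y‖ ^ 2 =
        ‖f b - y‖ ^ 2 + 2 * (u * (inner ℂ (f d) (f b - y)).re) + u ^ 2 * ‖f d‖ ^ 2 := by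
      have : f (b + (u : ℂ) • d) - y = (u : ℂ) • f d + (f b - y) := by
        rw [map_add, map_smul]; abel
      rw [this, norm_add_sq (𝕜 := ℂ), inner_smul_left, norm_smul, Complex.norm_real,
        Real.norm_of_nonneg hu.le]
      rw [Complex.conj_ofReal]
      change _ + 2 * (((u : ℂ) * inner ℂ (f d) (f b - y)).re) + _ = _
      rw [Complex.re_ofReal_mul]
      ring
    rw [h3] at h1
    have h4 : 0 ≤ u * (A + u * (‖f d‖ ^ 2 / 2)) := by
      have := mul_le_mul_of_nonneg_left h2 hl.le
      rw [hA]
      nlinarith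
    exact nonneg_of_mul_nonneg_right h4 hu
  by_contra hneg
  push Not at hneg
  have hB : 0 ≤ ‖f d‖ ^ 2 / 2 := by positivity
  have hpos : 0 < ‖f d‖ ^ 2 / 2 - A := by linarith
  have h5 := key (-A / (‖f d‖ ^ 2 / 2 - A)) (div_pos (by linarith) hpos)
    (by rw [div_le_one hpos]; linarith)
  have h6 : A + -A / (‖f d‖ ^ 2 / 2 - A) * (‖f d‖ ^ 2 / 2) = -A ^ 2 / (‖f d‖ ^ 2 / 2 - A) := by
    have hne := hpos.ne'
    generalize ‖f d‖ ^ 2 / 2 = B at *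
    field_simp; ring
  rw [h6] at h5
  have : 0 < A ^ 2 / (‖f d‖ ^ 2 / 2 - A) := div_pos (by nlinarith) hpos
  rw [neg_div] at h5
  linarith

lemma f_expand (f : (Fin p → ℂ) →ₗ[ℂ] E) (w : Fin p → ℂ) (x : E) :
    inner ℂ (f w) x = ∑ j, conj (w j) * inner ℂ (f (Pi.single j 1)) x := by
  have : f w = ∑ j, w j • f (Pi.single j 1) := by
    conv_lhs => rw [← Finset.univ_sum_single w]
    rw [map_sum]
    refine Finset.sum_congr rfl fun j _ => ?_
    rw [← map_smul]
    congr 1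
    rw [← Pi.single_smul]; simp
  rw [this, sum_inner]
  exact Finset.sum_congr rfl fun j _ => by rw [inner_smul_left]

lemma l1_le_sqrt (T : Finset (Fin p)) (v : Fin p → ℂ) (s : ℕ) (hT : T.card ≤ s) :
    l1 (res T v) ≤ Real.sqrt s * Real.sqrt (l2sq (res T v)) := by
  rw [← Real.sqrt_mul (by positivity), l1_res, l2sq_res]
  apply Real.le_sqrt_of_sq_le
  refine sq_sum_le_card_mul_sum_sq.trans ?_
  have : (T.card : ℝ) ≤ s := by exact_mod_cast hT
  gcongr

/-- basic inequality -/
lemma basic (f : (Fin p → ℂ) →ₗ[ℂ] E) (e : E) (lam : ℝ) (hl : 0 < lam) (b β0 : Fin p → ℂ)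
    (hmin : ∀ z, 1 / 2 * ‖f b - (f β0 + e)‖ ^ 2 + lam * l1 b ≤
      1 / 2 * ‖f z - (f β0 + e)‖ ^ 2 + lam * l1 z)
    (hnoise : ∀ j, ‖inner ℂ (f (Pi.single j 1)) e‖ ≤ lam / 4)
    (S : Finset (Fin p)) (hS : ∀ i ∉ S, β0 i = 0) :
    ‖f (b - β0)‖ ^ 2 ≤ 5 / 4 * lam * l1 (res S (b - β0)) - 3 / 4 * lam * l1 (res Sᶜ (b - β0)) := by
  have h1 := vi f _ lam hl b hmin (-(b - β0))
  set h := b - β0 with hh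
  have e1 : f b - (f β0 + e) = f h - e := by rw [hh, map_sub]; abel
  have e2 : b + -h = β0 := by rw [hh]; abel
  rw [e1, e2, map_neg, inner_neg_left, inner_sub_right, inner_self_eq_norm_sq_to_K] at h1
  have e3 : (-(((‖f h‖ : ℝ) : ℂ) ^ 2 - inner ℂ (f h) e)).re = -‖f h‖ ^ 2 + (inner ℂ (f h) e).re := by
    rw [← Complex.ofReal_pow, Complex.neg_re, Complex.sub_re, Complex.ofReal_re]; ring
  have e4 : (inner ℂ (f h) e).re ≤ lam / 4 * l1 h := by
    refine (Complex.re_le_norm _).trans ?_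
    rw [f_expand]
    refine (norm_sum_le _ _).trans ?_
    unfold l1
    rw [Finset.mul_sum]
    apply Finset.sum_le_sum
    intro j _
    rw [norm_mul, RCLike.norm_conj, mul_comm]
    exact mul_le_mul_of_nonneg_right (hnoise j) (norm_nonneg _)
  have e5 : l1 β0 - l1 b ≤ l1 (res S h) - l1 (res Sᶜ h) := by
    rw [l1_res, l1_res]
    have a1 : l1 β0 = ∑ i ∈ S, ‖β0 i‖ + ∑ i ∈ Sᶜ, ‖β0 i‖ := by
      rw [Finset.sum_add_sum_compl]; rfl
    have a2 : l1 b = ∑ i ∈ S, ‖b i‖ + ∑ i ∈ Sᶜ, ‖b i‖ := by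
      rw [Finset.sum_add_sum_compl]; rfl
    have a3 : ∑ i ∈ Sᶜ, ‖β0 i‖ = 0 := Finset.sum_eq_zero fun i hi => by
      rw [hS i (by simpa using hi), norm_zero]
    have a4 : ∑ i ∈ Sᶜ, ‖h i‖ = ∑ i ∈ Sᶜ, ‖b i‖ := Finset.sum_congr rfl fun i hi => by
      rw [hh, Pi.sub_apply, hS i (by simpa using hi), sub_zero]
    have a5 : ∑ i ∈ S, ‖β0 i‖ ≤ ∑ i ∈ S, ‖b i‖ + ∑ i ∈ S, ‖h i‖ := by
      rw [← Finset.sum_add_distrib]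
      apply Finset.sum_le_sum
      intro i _
      have : β0 i = b i - h i := by simp [hh]
      rw [this]; exact norm_sub_le _ _
    linarith
  have e6 := l1_split S h
  have e7 := mul_le_mul_of_nonneg_left e5 hl.le
  have e8 : 0 ≤ -‖f h‖ ^ 2 + (inner ℂ (f h) e).re + lam * (l1 β0 - l1 b) := by
    rw [← e3]; exact h1
  rw [e6] at e4
  nlinarith

lemma kkt (f : (Fin p → ℂ) →ₗ[ℂ] E) (y : E) (lam : ℝ) (hl : 0 < lam) (b : Fin p → ℂ)
    (hmin : ∀ z, 1 / 2 * ‖f b - y‖ ^ 2 + lam * l1 b ≤ 1 / 2 * ‖f z - y‖ ^ 2 + lam * l1 z)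
    (j : Fin p) (hj : b j ≠ 0) : lam ≤ ‖inner ℂ (f (Pi.single j 1)) (f b - y)‖ := by
  have h1 := vi f y lam hl b hmin (Pi.single j (-(b j)))
  have e1 : f (Pi.single j (-(b j))) = (-(b j)) • f (Pi.single j 1) := by
    rw [← map_smul, ← Pi.single_smul]; simp
  have e2 : l1 (b + Pi.single j (-(b j))) - l1 b = - ‖b j‖ := by
    unfold l1
    rw [← Finset.sum_sub_distrib, Finset.sum_eq_single j]
    · simp
    · intro i _ hi; simp [hi]
    · simp
  rw [e1, e2, inner_smul_left] at h1
  have h2 := Complex.re_le_norm (conj (-(b j)) * inner ℂ (f (Pi.single j 1)) (f b - y))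
  rw [norm_mul, RCLike.norm_conj, norm_neg] at h2
  have hb : 0 < ‖b j‖ := norm_pos_iff.2 hj
  refine le_of_mul_le_mul_left ?_ hb
  linarith

set_option maxHeartbeats 2000000 in
lemma abs_main (f : (Fin p → ℂ) →ₗ[ℂ] E) (e : E) (lam : ℝ) (hl : 0 < lam) (b β0 : Fin p → ℂ)
    (hmin : ∀ z, 1 / 2 * ‖f b - (f β0 + e)‖ ^ 2 + lam * l1 b ≤
      1 / 2 * ‖f z - (f β0 + e)‖ ^ 2 + lam * l1 z)
    (hnoise : ∀ j, ‖inner ℂ (f (Pi.single j 1)) e‖ ≤ lam / 4)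
    (s0 : ℕ) (hs0 : sparseCount β0 ≤ s0) (δ δt : ℝ) (hδ : 0 < δ) (hδ1 : δ < 1) (hδt : δt < δ)
    (hRIP : ∀ v, (sparseCount v : ℝ) ≤ (36 * (1 + δ) / (1 - δ) + 1) * s0 →
      (1 - δt) * l2sq v ≤ ‖f v‖ ^ 2 ∧ ‖f v‖ ^ 2 ≤ (1 + δt) * l2sq v) :
    (1 - δt) * Real.sqrt (l2sq (b - β0)) ≤ 5 / 4 * lam * Real.sqrt s0 := by
  set S := Finset.univ.filter fun i => β0 i ≠ 0 with hSdef
  have hS : ∀ i ∉ S, β0 i = 0 := by intro i hi; simpa [hSdef] using hi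
  have hScard : S.card ≤ s0 := hs0
  have hbas := basic f e lam hl b β0 hmin hnoise S hS
  set h := b - β0 with hh
  have hd1 : 0 < 1 - δ := by linarith
  rcases Nat.eq_zero_or_pos s0 with hz | hpos
  · subst hz
    have hS0 : S = ∅ := Finset.card_eq_zero.1 (by omega)
    have e0 : l1 (res S h) = 0 := by rw [l1_res, hS0]; simp
    have e1 : l1 (res Sᶜ h) = l1 h := by rw [l1_split S h, e0, zero_add]
    rw [e0, e1] at hbas
    have h2 : l1 h = 0 := by
      have := l1_nonneg' h
      have : 0 ≤ ‖f h‖ ^ 2 := by positivity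
      have : lam * l1 h ≤ 0 := by linarith
      exact le_antisymm (nonpos_of_mul_nonpos_right this hl) (l1_nonneg' h)
    have h3 : l2sq h = 0 := by
      unfold l1 at h2
      rw [Finset.sum_eq_zero_iff_of_nonneg (fun i _ => norm_nonneg _)] at h2
      unfold l2sq
      exact Finset.sum_eq_zero fun i hi => by rw [h2 i hi]; norm_num
    rw [h3]; simp
  have hs1 : (1 : ℝ) ≤ s0 := by exact_mod_cast hpos
  set r := (1 + δ) / (1 - δ) with hr
  have hr1 : 1 ≤ r := by rw [hr, le_div_iff₀ hd1]; linarith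
  have hrr : r * (1 - δ) = 1 + δ := by rw [hr]; field_simp
  have ht : (36 * (1 + δ) / (1 - δ) + 1) * (s0 : ℝ) = 36 * r * s0 + s0 := by rw [hr]; ring
  rw [ht] at hRIP
  have hrs : 1 ≤ r * s0 := by nlinarith
  set M := ⌊36 * r * s0⌋₊ with hMdef
  have hM1 : (M : ℝ) ≤ 36 * r * s0 := Nat.floor_le (by positivity)
  have hM2 : 36 * r * s0 < M + 1 := Nat.lt_floor_add_one _
  have hM3 : 35 * (r * s0) ≤ M := by nlinarith
  have hMpos : 0 < M := by
    have : (0 : ℝ) < M := by linarith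
    exact_mod_cast this
  set C := Real.sqrt (1 + δ) with hC
  have hup : ∀ v, (sparseCount v : ℝ) ≤ 36 * r * s0 + s0 → ‖f v‖ ≤ C * Real.sqrt (l2sq v) := by
    intro v hv
    have := (hRIP v hv).2
    rw [hC, ← Real.sqrt_mul (by linarith)]
    apply Real.le_sqrt_of_sq_le
    have := l2sq_nonneg' v
    nlinarith
  have hlo : ∀ v, (sparseCount v : ℝ) ≤ 36 * r * s0 + s0 →
      Real.sqrt (1 - δ) * Real.sqrt (l2sq v) ≤ ‖f v‖ := by
    intro v hv
    have := (hRIP v hv).1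
    rw [← Real.sqrt_mul (by linarith)]
    apply Real.sqrt_le_iff.2 ⟨norm_nonneg _, ?_⟩
    have := l2sq_nonneg' v
    nlinarith
  have hsM : 0 < Real.sqrt M := Real.sqrt_pos.2 (by exact_mod_cast hMpos)
  -- compatibility
  obtain ⟨T, hTc, htail⟩ := block_tail f C (Real.sqrt_nonneg _) M hMpos (by
    intro v hv
    apply hup
    have : (sparseCount v : ℝ) ≤ M := by exact_mod_cast hv
    linarith) (res Sᶜ h)
  have hdec : h = res (S ∪ T) h + res Tᶜ (res Sᶜ h) := by
    funext i
    by_cases h1 : i ∈ S <;> by_cases h2 : i ∈ T <;> simp [res, h1, h2]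
  have hlow := hlo (res (S ∪ T) h) (by
    have h1 := (sparse_res (S ∪ T) h).trans (Finset.card_union_le S T)
    have h2 : (sparseCount (res (S ∪ T) h) : ℝ) ≤ s0 + M := by
      exact_mod_cast h1.trans (by omega)
    linarith)
  set HS := Real.sqrt (l2sq (res S h)) with hHS
  have hHS0 : 0 ≤ HS := Real.sqrt_nonneg _
  have hmono : HS ≤ Real.sqrt (l2sq (res (S ∪ T) h)) := by
    apply Real.sqrt_le_sqrt
    rw [l2sq_res, l2sq_res]
    exact Finset.sum_le_sum_of_subset_of_nonneg Finset.subset_union_left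
      (fun _ _ _ => by positivity)
  have hl1S : l1 (res S h) ≤ Real.sqrt s0 * HS := l1_le_sqrt S h s0 hScard
  set Q := ‖f h‖ with hQ
  have hQ0 : 0 ≤ Q := norm_nonneg _
  have hcone : l1 (res Sᶜ h) ≤ 5 / 3 * (Real.sqrt s0 * HS) := by
    have : lam * l1 (res Sᶜ h) ≤ lam * (5 / 3 * l1 (res S h)) := by nlinarith [sq_nonneg Q]
    have := le_of_mul_le_mul_left this hl
    linarith
  have hQup : Q ^ 2 ≤ 5 / 4 * lam * (Real.sqrt s0 * HS) := by
    have := l1_nonneg' (res Sᶜ h)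
    have := mul_le_mul_of_nonneg_left hl1S hl.le
    have : 0 ≤ lam * l1 (res Sᶜ h) := by positivity
    linarith
  set D := Real.sqrt (1 - δ) with hD
  have hDpos : 0 < D := Real.sqrt_pos.2 hd1
  have hDsq : D ^ 2 = 1 - δ := Real.sq_sqrt hd1.le
  have hCsq : C ^ 2 = 1 + δ := Real.sq_sqrt (by linarith)
  have hCpos : 0 < C := Real.sqrt_pos.2 (by linarith)
  have hs0sq : Real.sqrt s0 ^ 2 = (s0 : ℝ) := Real.sq_sqrt (by positivity)
  have hMsq : Real.sqrt M ^ 2 = (M : ℝ) := Real.sq_sqrt (by positivity)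
  have hratio : C * (5 / 3 * Real.sqrt s0) ≤ D / 2 * Real.sqrt M := by
    refine (sq_le_sq₀ (by positivity) (by positivity)).1 ?_
    have e1 : (C * (5 / 3 * Real.sqrt s0)) ^ 2 = (1 + δ) * (25 / 9 * s0) := by
      rw [mul_pow, mul_pow, hCsq, hs0sq]; norm_num
    have e2 : (D / 2 * Real.sqrt M) ^ 2 = (1 - δ) * M / 4 := by
      rw [mul_pow, div_pow, hDsq, hMsq]; ring
    rw [e1, e2, ← hrr]
    have := mul_le_mul_of_nonneg_left hM3 hd1.le
    have : 0 ≤ (1 - δ) * (r * s0) := by positivity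
    nlinarith
  have htail2 : ‖f (res Tᶜ (res Sᶜ h))‖ ≤ D / 2 * HS := by
    refine htail.trans ?_
    rw [← mul_div_assoc, div_le_iff₀ hsM]
    have a1 := mul_le_mul_of_nonneg_left hcone hCpos.le
    have a2 := mul_le_mul_of_nonneg_right hratio hHS0
    nlinarith
  have hQlow : D / 2 * HS ≤ Q := by
    have a1 : ‖f (res (S ∪ T) h)‖ ≤ Q + ‖f (res Tᶜ (res Sᶜ h))‖ := by
      have : f (res (S ∪ T) h) = f h - f (res Tᶜ (res Sᶜ h)) := by
        conv_rhs => rw [hdec]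
        rw [map_add]
        have : res Tᶜ (res Sᶜ (res (S ∪ T) h + res Tᶜ (res Sᶜ h))) = res Tᶜ (res Sᶜ h) := by
          rw [← hdec]
        rw [this]; abel
      rw [this]; exact norm_sub_le _ _
    have a2 := mul_le_mul_of_nonneg_left hmono hDpos.le
    linarith
  have hQ2 : Q * D ≤ 5 / 2 * lam * Real.sqrt s0 := by
    rcases hQ0.eq_or_lt with hq | hq
    · rw [← hq, zero_mul]; positivity
    · refine le_of_mul_le_mul_left ?_ hq
      have a1 := mul_le_mul_of_nonneg_left hQup hDpos.le
      have a2 : 0 ≤ 5 / 2 * lam * Real.sqrt s0 := by positivity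
      have a3 := mul_le_mul_of_nonneg_left hQlow a2
      linarith
  have hQ3 : Q ^ 2 * (1 - δ) ≤ 25 / 4 * lam ^ 2 * s0 := by
    have := pow_le_pow_left₀ (by positivity) hQ2 2
    rw [mul_pow, hDsq, mul_pow, hs0sq] at this
    linarith
  -- support bound
  have hsupp : (sparseCount b : ℝ) ≤ 36 * r * s0 := by
    by_contra hcon
    push Not at hcon
    have hlt : M + 1 ≤ sparseCount b := (Nat.floor_lt (by positivity)).2 hcon
    obtain ⟨U, hUsub, hUc⟩ := Finset.exists_subset_card_eq
      (s := Finset.univ.filter fun i => b i ≠ 0) hlt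
    set c : Fin p → ℂ := fun j => inner ℂ (f (Pi.single j 1)) (f h) with hc
    have hcj : ∀ j ∈ U, 3 / 4 * lam ≤ ‖c j‖ := by
      intro j hj
      have hbj : b j ≠ 0 := by simpa using hUsub hj
      have k1 := kkt f _ lam hl b hmin j hbj
      have e1 : f b - (f β0 + e) = f h - e := by rw [hh, map_sub]; abel
      rw [e1, inner_sub_right] at k1
      have k2 := norm_sub_le (c j) (inner ℂ (f (Pi.single j 1)) e)
      have k3 := hnoise j
      have k4 : lam ≤ ‖c j - inner ℂ (f (Pi.single j 1)) e‖ := k1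
      linarith
    have hw1 : l2sq (res U c) ≤ ‖f (res U c)‖ * Q := by
      have e1 : inner ℂ (f (res U c)) (f h) = ((l2sq (res U c) : ℝ) : ℂ) := by
        rw [f_expand]
        unfold l2sq
        rw [Complex.ofReal_sum]
        refine Finset.sum_congr rfl fun j _ => ?_
        by_cases hj : j ∈ U
        · have : inner ℂ (f (Pi.single j 1)) (f h) = res U c j := by simp [res, hj, hc]
          rw [this, Complex.conj_mul']; simp
        · simp [res, hj]
      have e2 := norm_inner_le_norm (𝕜 := ℂ) (f (res U c)) (f h)
      rw [e1, Complex.norm_real] at e2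
      exact (le_abs_self _).trans e2
    have hw2 := hup (res U c) (by
      have h1 := sparse_res U c
      rw [hUc] at h1
      have h2 : (sparseCount (res U c) : ℝ) ≤ M + 1 := by exact_mod_cast h1
      linarith)
    set W := Real.sqrt (l2sq (res U c)) with hW
    have hW0 : 0 ≤ W := Real.sqrt_nonneg _
    have hWsq : W ^ 2 = l2sq (res U c) := Real.sq_sqrt (l2sq_nonneg' _)
    have hWle : W ≤ C * Q := by
      rcases hW0.eq_or_lt with hq | hq
      · rw [← hq]; positivity
      · refine le_of_mul_le_mul_left ?_ hq
        have := mul_le_mul_of_nonneg_right hw2 hQ0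
        rw [← hWsq] at hw1
        linarith
    have hW2 : W ^ 2 ≤ (1 + δ) * Q ^ 2 := by
      have := pow_le_pow_left₀ hW0 hWle 2
      rwa [mul_pow, hCsq] at this
    have hW3 : ((M : ℝ) + 1) * (9 / 16 * lam ^ 2) ≤ W ^ 2 := by
      rw [hWsq, l2sq_res]
      have := Finset.card_nsmul_le_sum U (fun i => ‖c i‖ ^ 2) (9 / 16 * lam ^ 2) (by
        intro j hj
        have := pow_le_pow_left₀ (by positivity) (hcj j hj) 2
        have e : (3 / 4 * lam) ^ 2 = 9 / 16 * lam ^ 2 := by ring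
        rwa [e] at this)
      rw [hUc] at this
      simpa using this
    have a1 : (1 + δ) * Q ^ 2 ≤ r * (25 / 4 * lam ^ 2 * s0) := by
      rw [← hrr, mul_assoc, mul_comm (1 - δ)]
      exact mul_le_mul_of_nonneg_left hQ3 (by positivity)
    have hl2 : 0 < lam ^ 2 := by positivity
    have a2 : (36 * r * s0) * (9 / 16 * lam ^ 2) < ((M : ℝ) + 1) * (9 / 16 * lam ^ 2) :=
      mul_lt_mul_of_pos_right hM2 (by positivity)
    have a3 : 0 < r * s0 * lam ^ 2 := by positivity
    linarith
  have hsparse : (sparseCount h : ℝ) ≤ 36 * r * s0 + s0 := by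
    have h1 : sparseCount h ≤ sparseCount b + sparseCount β0 := by
      unfold sparseCount
      refine (Finset.card_le_card ?_).trans (Finset.card_union_le _ _)
      intro i hi
      simp only [Finset.mem_filter, Finset.mem_union, Finset.mem_univ, true_and] at hi ⊢
      by_contra hcon
      push Not at hcon
      exact hi (by simp [hh, hcon.1, hcon.2])
    have h2 : (sparseCount h : ℝ) ≤ sparseCount b + sparseCount β0 := by exact_mod_cast h1
    have h3 : (sparseCount β0 : ℝ) ≤ s0 := by exact_mod_cast hs0
    linarith
  have hfin := (hRIP h hsparse).1
  set H := Real.sqrt (l2sq h) with hH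
  have hH0 : 0 ≤ H := Real.sqrt_nonneg _
  have hHsq : H ^ 2 = l2sq h := Real.sq_sqrt (l2sq_nonneg' _)
  have hHle : HS ≤ H := by
    apply Real.sqrt_le_sqrt
    rw [l2sq_res]
    exact Finset.sum_le_sum_of_subset_of_nonneg (Finset.subset_univ _)
      (fun _ _ _ => by positivity)
  rcases hH0.eq_or_lt with hq | hq
  · rw [← hq, mul_zero]; positivity
  · refine le_of_mul_le_mul_left ?_ hq
    have a2 : 0 ≤ 5 / 4 * lam * Real.sqrt s0 := by positivity
    have a3 := mul_le_mul_of_nonneg_left hHle a2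
    rw [← hHsq] at hfin
    linarith

end abs

/-- Let `β⁰ ∈ ℂᵖ` be `s₀`-sparse, `y = Xβ⁰ + ε`, `δ ∈ (0,1)`. Suppose
`X/√n` satisfies the RIP of order `t := (36(1+δ)/(1-δ)+1)s₀` with constant `δₜ < δ`, and
`max_j (2/n)|⟨ε, Xⱼ⟩| ≤ λ₀` with `λ₀ = (σ√K/√n)(2+√(10 log p))`. Let `β̂` be a complex
LASSO estimator with regularization parameter `λ = 2λ₀`, and assume `p ≥ 3`. Then
`‖β̂-β⁰‖₂ ≤ C_δ^σ √K √(s₀ log p)/√n` with `C_δ^σ = √640 σ/(1-δₜ)`. -/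
theorem lasso_oracle_l2
    {n p : ℕ} (hn : 0 < n) (hp : 3 ≤ p)
    (X : Matrix (Fin n) (Fin p) ℂ) (β0 : Fin p → ℂ) (ε y : Fin n → ℂ)
    (s0 : ℕ) (hs0 : sparseCount β0 ≤ s0)
    (hy : y = X.mulVec β0 + ε)
    (δ δt : ℝ) (hδ : δ ∈ Set.Ioo (0 : ℝ) 1) (hδt : δt < δ)
    (hRIP : RIP ((((Real.sqrt n : ℝ) : ℂ))⁻¹ • X)
      ((36 * (1 + δ) / (1 - δ) + 1) * s0) δt)
    (K σ : ℝ) (hK : 1 ≤ K) (hσ : 0 < σ)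
    (lam0 : ℝ)
    (hlam0 : lam0 = σ * Real.sqrt K / Real.sqrt n * (2 + Real.sqrt (10 * Real.log p)))
    (hnoise : ∀ j : Fin p, 2 / (n : ℝ) * ‖∑ k, (starRingEnd ℂ) (ε k) * X k j‖ ≤ lam0)
    (lam : ℝ) (hlam : lam = 2 * lam0)
    (βhat : Fin p → ℂ) (hβhat : IsLasso X y lam βhat) :
    Real.sqrt (l2sq (βhat - β0)) ≤
      Real.sqrt 640 * σ / (1 - δt) * Real.sqrt K *
        (Real.sqrt (s0 * Real.log p) / Real.sqrt n) := by
  have hnpos : (0 : ℝ) < n := by exact_mod_cast hn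
  have hsn : 0 < Real.sqrt n := Real.sqrt_pos.2 hnpos
  have hsn2 : Real.sqrt n * Real.sqrt n = n := Real.mul_self_sqrt hnpos.le
  have hKpos : 0 < Real.sqrt K := Real.sqrt_pos.2 (by linarith)
  have hlog : 1 ≤ Real.log p := by
    rw [Real.le_log_iff_exp_le (by positivity)]
    have : (3 : ℝ) ≤ p := by exact_mod_cast hp
    linarith [Real.exp_one_lt_d9]
  have hlam0pos : 0 < lam0 := by rw [hlam0]; positivity
  have hl : 0 < lam := by linarith
  set a : ℂ := ((Real.sqrt n : ℝ) : ℂ)⁻¹ with ha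
  have han : ‖a‖ ^ 2 = 1 / n := by
    rw [ha, norm_inv, Complex.norm_real, Real.norm_of_nonneg hsn.le, inv_pow, sq, hsn2, one_div]
  let f : (Fin p → ℂ) →ₗ[ℂ] EuclideanSpace ℂ (Fin n) :=
    a • ((WithLp.linearEquiv 2 ℂ (Fin n → ℂ)).symm.toLinearMap ∘ₗ X.mulVecLin)
  have hf : ∀ v, f v = a • WithLp.toLp 2 (X.mulVec v) := fun v => rfl
  let e : EuclideanSpace ℂ (Fin n) := a • WithLp.toLp 2 ε
  have hnorm : ∀ w : Fin n → ℂ, ‖a • (WithLp.toLp 2 w : EuclideanSpace ℂ (Fin n))‖ ^ 2 =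
      1 / n * l2sq w := by
    intro w
    rw [norm_smul, mul_pow, han, EuclideanSpace.norm_sq_eq]; rfl
  have hfy : ∀ z, ‖f z - (f β0 + e)‖ ^ 2 = 1 / n * l2sq (X.mulVec z - y) := by
    intro z
    rw [← hnorm, hy, hf, hf, WithLp.toLp_sub, WithLp.toLp_add, smul_sub, smul_add]
  have key := abs_main f e lam hl βhat β0 (by
      intro z
      rw [hfy, hfy]
      have h1 := hβhat z
      have e1 : ∀ q : ℝ, 1 / (2 * (n : ℝ)) * q = 1 / 2 * (1 / n * q) := by
        intro q; field_simp
      rw [e1, e1] at h1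
      exact h1) (by
      intro j
      have h1 := hnoise j
      rw [← norm_inner_symm, hf]
      change ‖inner ℂ (a • (WithLp.toLp 2 ε : EuclideanSpace ℂ (Fin n))) _‖ ≤ _
      rw [inner_smul_left, inner_smul_right, norm_mul, norm_mul, RCLike.norm_conj, ← mul_assoc,
        ← sq, han]
      have e1 : inner ℂ (WithLp.toLp 2 ε : EuclideanSpace ℂ (Fin n))
          (WithLp.toLp 2 (X.mulVec (Pi.single j 1))) =
          ∑ k, (starRingEnd ℂ) (ε k) * X k j := by
        rw [PiLp.inner_apply]
        refine Finset.sum_congr rfl fun k _ => ?_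
        simp [mul_comm]
      rw [e1]
      have e2 : 2 / (n : ℝ) * ‖∑ k, (starRingEnd ℂ) (ε k) * X k j‖ =
        2 * (1 / (n : ℝ) * ‖∑ k, (starRingEnd ℂ) (ε k) * X k j‖) := by ring
      rw [e2] at h1
      linarith) s0 hs0 δ δt hδ.1 hδ.2 hδt (by
      intro v hv
      have h1 := hRIP v hv
      have e1 : l2sq ((a • X).mulVec v) = ‖f v‖ ^ 2 := by
        rw [hf, EuclideanSpace.norm_sq_eq, Matrix.smul_mulVec]; rfl
      rw [e1] at h1
      exact h1)
  have hd : 0 < 1 - δt := by linarith [hδ.2]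
  set q := Real.sqrt (Real.log p) with hq
  have hq1 : 1 ≤ q := Real.one_le_sqrt.2 hlog
  have e1 : Real.sqrt (10 * Real.log p) = Real.sqrt 10 * q := Real.sqrt_mul (by norm_num) _
  have e2 : Real.sqrt (s0 * Real.log p) = Real.sqrt s0 * q := Real.sqrt_mul (by positivity) _
  have e3 : Real.sqrt 640 = 8 * Real.sqrt 10 := by
    rw [show (640 : ℝ) = 8 ^ 2 * 10 by norm_num, Real.sqrt_mul (by norm_num),
      Real.sqrt_sq (by norm_num)]
  have h10 : 1 ≤ Real.sqrt 10 := Real.one_le_sqrt.2 (by norm_num)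
  have hkey2 : 5 / 2 * (2 + Real.sqrt 10 * q) ≤ 8 * Real.sqrt 10 * q := by nlinarith
  have e4 : Real.sqrt 640 * σ / (1 - δt) * Real.sqrt K *
        (Real.sqrt (s0 * Real.log p) / Real.sqrt n) =
      (σ * Real.sqrt K / Real.sqrt n * Real.sqrt s0 * (8 * Real.sqrt 10 * q)) / (1 - δt) := by
    rw [e2, e3]; field_simp
  rw [e4, le_div_iff₀ hd, mul_comm]
  refine key.trans ?_
  rw [hlam, hlam0, e1]
  have hc : 0 ≤ σ * Real.sqrt K / Real.sqrt n * Real.sqrt s0 := by positivity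
  have := mul_le_mul_of_nonneg_left hkey2 hc
  linarith
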